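/- arXiv:1105.1865 — 8 statements merged into one kernel-verified Lean document; each statement's English description precedes it below -/
import Mathlib

section
/- Let $E$ be a real inner product space, let $o, c \in E$, and let $0 < \omega_0 \le R$ be real numbers such that the closed ball of radius $\omega_0$ about $o$ is contained in the closed ball of radius $R$ about $c$. Let $p$ satisfy $\|p - c\| = R$ and $p \ne o$, and let $\beta$ be the angle between $p - c$ and $p - o$, i.e. $\cos\beta = \langle p-c, p-o\rangle/(R\|p-o\|)$. Then $\cos\beta > 0$ and $\tan \beta \le \sqrt{R^2/\omega_0^2 - 1}$, i.e. with $k = 1/R$, $|\tan\beta| \le \sqrt{1/(k^2\omega_0^2) - 1}$. -/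
/-- Bound on the angle `β` between the outer normal direction `p - c` and the radial
direction `p - o`: `cos β > 0` and `tan β ≤ √(R²/ω₀² - 1)`. -/
theorem stmt_1 {E : Type*} [NormedAddCommGroup E] [InnerProductSpace ℝ E]
    (o c : E) (ω₀ R : ℝ) (hω₀ : 0 < ω₀) (hωR : ω₀ ≤ R)
    (hball : Metric.closedBall o ω₀ ⊆ Metric.closedBall c R)
    (p : E) (hp : ‖p - c‖ = R) (hpo : p ≠ o)
    (β : ℝ) (hβ : β = InnerProductGeometry.angle (p - c) (p - o)) :
    0 < Real.cos β ∧ Real.tan β ≤ Real.sqrt (R ^ 2 / ω₀ ^ 2 - 1) := by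
  have hR : 0 < R := lt_of_lt_of_le hω₀ hωR
  have hd : ‖o - c‖ ≤ R - ω₀ := by
    by_cases h : o = c
    · subst h
      simpa using hωR
    · have hpos : 0 < ‖o - c‖ := norm_pos_iff.mpr (sub_ne_zero.mpr h)
      have hq : o + (ω₀ / ‖o - c‖) • (o - c) ∈ Metric.closedBall o ω₀ := by
        rw [Metric.mem_closedBall, dist_eq_norm, add_sub_cancel_left, norm_smul,
          Real.norm_of_nonneg (by positivity), div_mul_cancel₀ _ hpos.ne']
      have h2 := hball hq
      rw [Metric.mem_closedBall, dist_eq_norm] at h2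
      have h3 : o + (ω₀ / ‖o - c‖) • (o - c) - c = (1 + ω₀ / ‖o - c‖) • (o - c) := by
        rw [add_smul, one_smul]; abel
      rw [h3, norm_smul, Real.norm_of_nonneg (by positivity), add_mul,
        div_mul_cancel₀ _ hpos.ne'] at h2
      linarith
  have ha : 0 < ‖p - o‖ := norm_pos_iff.mpr (sub_ne_zero.mpr hpo)
  have hexp := norm_sub_sq_real (p - c) (p - o)
  rw [sub_sub_sub_cancel_left, hp] at hexp
  have hd2 : ‖o - c‖ ^ 2 ≤ (R - ω₀) ^ 2 := pow_le_pow_left₀ (norm_nonneg _) hd 2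
  have hin : ω₀ * ‖p - o‖ ≤ inner ℝ (p - c) (p - o) := by
    nlinarith [sq_nonneg (‖p - o‖ - ω₀), mul_nonneg hω₀.le (sub_nonneg.mpr hωR)]
  have hcos : ω₀ / R ≤ Real.cos β := by
    rw [hβ, InnerProductGeometry.cos_angle, hp, div_le_div_iff₀ hR (by positivity)]
    nlinarith
  have hc0 : 0 < Real.cos β := lt_of_lt_of_le (by positivity) hcos
  refine ⟨hc0, Real.le_sqrt_of_sq_le ?_⟩
  have ht := Real.inv_one_add_tan_sq hc0.ne'
  have h1 : 1 + Real.tan β ^ 2 = (Real.cos β ^ 2)⁻¹ := by rw [← ht, inv_inv]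
  have h2 : (Real.cos β ^ 2)⁻¹ ≤ ((ω₀ / R) ^ 2)⁻¹ :=
    inv_anti₀ (by positivity) (pow_le_pow_left₀ (by positivity) hcos 2)
  have h3 : ((ω₀ / R) ^ 2)⁻¹ = R ^ 2 / ω₀ ^ 2 := by rw [div_pow, inv_div]
  linarith
end

section
/- With $f$, $t_+$, $t_-$ as in the context: $t_+(x) = 2\sqrt{x} - \tfrac{4}{3} f'''(0)\, x + O(x^{3/2})$ as $x \to 0^+$. -/
open Filter Topology Asymptotics

lemma alg_bound (a C t s : ℝ) (hC : 0 ≤ C) (ht : 0 < t) (hs : 0 ≤ s) (ht1 : t ≤ 1)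
    (hM : (|a| + C) * t ≤ 1/8) (h : |s^2 - t^2/4 - a * t^3/6| ≤ C * t^4) :
    |t - (2 * s - 4/3 * a * s^2)| ≤ 27 * (4 * C + 14 * |a| * (|a| + C)) * s^3 := by
  have ha := abs_nonneg a
  set M := |a| + C with hMd
  have hM0 : 0 ≤ M := by positivity
  have h1 : |s^2 - t^2/4| ≤ M * t^3 := by
    have e : s^2 - t^2/4 = (s^2 - t^2/4 - a * t^3/6) + a * (t^3/6) := by ring
    have e2 : |a * (t^3/6)| = |a| * (t^3/6) := by
      rw [abs_mul, abs_of_nonneg (by positivity : (0:ℝ) ≤ t^3/6)]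
    have h3 : C * t^4 ≤ C * t^3 :=
      mul_le_mul_of_nonneg_left (pow_le_pow_of_le_one ht.le ht1 (by norm_num)) hC
    have h4 : 0 ≤ |a| * t^3 := by positivity
    have := abs_add_le (s^2 - t^2/4 - a * t^3/6) (a * (t^3/6))
    rw [← e, e2] at this
    rw [hMd, add_mul]
    linarith
  have h2 : M * t^3 ≤ t^2/8 := by
    have := mul_le_mul_of_nonneg_right hM (sq_nonneg t)
    nlinarith
  have h1' := abs_le.1 (h1.trans h2)
  have hts : t ≤ 3 * s := by
    nlinarith
  have hst : s ≤ t := by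
    nlinarith
  have h5 : |s - t/2| ≤ 2 * M * t^2 := by
    have e : |s^2 - t^2/4| = |s - t/2| * (s + t/2) := by
      rw [← abs_of_nonneg (by positivity : 0 ≤ s + t/2), ← abs_mul]
      congr 1; ring
    have h6 : |s - t/2| * (t/2) ≤ |s - t/2| * (s + t/2) :=
      mul_le_mul_of_nonneg_left (by linarith) (abs_nonneg _)
    have h7 : |s - t/2| * (t/2) ≤ (2 * M * t^2) * (t/2) := by
      calc _ ≤ _ := h6
        _ ≤ M * t^3 := e ▸ h1
        _ = _ := by ring
    exact le_of_mul_le_mul_right h7 (by positivity)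
  have h8 : |t - (2 * s - 4/3 * a * s^2)| ≤ (4 * C + 14 * |a| * M) * t^3 := by
    set E := t - (2 * s - 4/3 * a * s^2) with hE
    have e : E * (s + t/2) = -2 * (s^2 - t^2/4 - a * t^3/6)
        + 4/3 * (a * ((s - t/2) * (s^2 + s*t + t^2/2))) := by rw [hE]; ring
    have hq : 0 ≤ s^2 + s*t + t^2/2 := by positivity
    have h9 : |a * ((s - t/2) * (s^2 + s*t + t^2/2))| ≤ |a| * ((2 * M * t^2) * (5/2*t^2)) := by
      rw [abs_mul, abs_mul, abs_of_nonneg hq]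
      gcongr
      nlinarith
    have h10 : |E| * (t/2) ≤ ((4 * C + 14 * |a| * M) * t^3) * (t/2) := by
      calc |E| * (t/2) ≤ |E| * (s + t/2) :=
            mul_le_mul_of_nonneg_left (by linarith) (abs_nonneg _)
        _ = |E * (s + t/2)| := by rw [abs_mul, abs_of_nonneg (by positivity : 0 ≤ s + t/2)]
        _ ≤ 2 * (C * t^4) + 4/3 * (|a| * ((2 * M * t^2) * (5/2*t^2))) := by
            rw [e, abs_le]
            have := abs_le.1 h
            have := abs_le.1 h9
            constructor <;> linarith
        _ ≤ _ := by
            have : 0 ≤ |a| * M * t^4 := by positivity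
            nlinarith
    exact le_of_mul_le_mul_right h10 (by positivity)
  have h11 : t^3 ≤ (3*s)^3 := pow_le_pow_left₀ ht.le hts 3
  calc _ ≤ _ := h8
    _ ≤ (4 * C + 14 * |a| * M) * (3*s)^3 := by gcongr
    _ = _ := by ring

lemma taylor_bound (f : ℝ → ℝ) (hf : ContDiffAt ℝ 4 f 0)
    (hf0 : f 0 = 0) (hf1 : deriv f 0 = 0) (hf2 : deriv (deriv f) 0 = 1/2) :
    ∃ b > 0, ∃ C, 0 ≤ C ∧ ∀ t ∈ Set.Icc (0:ℝ) b,
      |f t - t^2/4 - deriv (deriv (deriv f)) 0 * t^3/6| ≤ C * t^4 := by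
  obtain ⟨u, hu, hfu⟩ := hf.contDiffOn (m := 4) le_rfl (by simp)
  obtain ⟨ε, hε, hb⟩ := Metric.mem_nhds_iff.1 hu
  have hb0 : (0:ℝ) < ε/2 := by positivity
  have hsub : Set.Icc (0:ℝ) (ε/2) ⊆ u := by
    intro t ht
    apply hb
    rw [Metric.mem_ball, Real.dist_eq, sub_zero, abs_of_nonneg ht.1]
    linarith [ht.2]
  have hc : ContDiffOn ℝ ((3:ℕ)+1) f (Set.Icc (0:ℝ) (ε/2)) := by
    have := hfu.mono hsub
    norm_num
    exact this
  obtain ⟨C, hC⟩ := exists_taylor_mean_remainder_bound hb0.le hc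
  refine ⟨ε/2, hb0, |C|, abs_nonneg _, fun t ht => ?_⟩
  have h := hC t ht
  have hmem : (0:ℝ) ∈ Set.Icc (0:ℝ) (ε/2) := ⟨le_rfl, hb0.le⟩
  have hud := uniqueDiffOn_Icc hb0
  have k : ∀ n : ℕ, n ≤ 4 → iteratedDerivWithin n f (Set.Icc (0:ℝ) (ε/2)) 0 = deriv^[n] f 0 := by
    intro n hn
    rw [iteratedDerivWithin_eq_iteratedDeriv hud (hf.of_le (by exact_mod_cast hn)) hmem,
      iteratedDeriv_eq_iterate]
  rw [taylor_within_apply] at h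
  simp only [Finset.sum_range_succ, Finset.sum_range_zero] at h
  rw [k 0 (by norm_num), k 1 (by norm_num), k 2 (by norm_num), k 3 (by norm_num)] at h
  simp only [Function.iterate_succ, Function.iterate_zero, Function.comp, id, hf0, hf1, hf2,
    Real.norm_eq_abs, smul_eq_mul, sub_zero, Nat.factorial] at h
  have h4 : C * t^4 ≤ |C| * t^4 := mul_le_mul_of_nonneg_right (le_abs_self C) (by positivity)
  refine le_trans (le_of_eq ?_) (h.trans h4)
  congr 1
  push_cast
  ring

theorem stmt_4 (f tp tm : ℝ → ℝ)
    (hf : ContDiffAt ℝ 4 f 0)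
    (hf0 : f 0 = 0) (hf1 : deriv f 0 = 0) (hf2 : deriv (deriv f) 0 = 1/2)
    (hfpos : ∀ᶠ t in 𝓝 (0:ℝ), 0 < deriv (deriv f) t)
    (htp : ∀ᶠ x in 𝓝[>] (0:ℝ), 0 < tp x ∧ f (tp x) = x)
    (htm : ∀ᶠ x in 𝓝[>] (0:ℝ), tm x < 0 ∧ f (tm x) = x)
    (htp0 : Tendsto tp (𝓝[>] (0:ℝ)) (𝓝 0))
    (htm0 : Tendsto tm (𝓝[>] (0:ℝ)) (𝓝 0)) :
    (fun x => tp x - (2 * Real.sqrt x - 4/3 * deriv (deriv (deriv f)) 0 * x))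
      =O[𝓝[>] (0:ℝ)] fun x => x ^ (3/2 : ℝ) := by
  obtain ⟨b, hb, C, hC, hT⟩ := taylor_bound f hf hf0 hf1 hf2
  set a := deriv (deriv (deriv f)) 0
  have hlim : Tendsto (fun x => (|a| + C) * tp x) (𝓝[>] (0:ℝ)) (𝓝 0) := by
    simpa using htp0.const_mul (|a| + C)
  refine IsBigO.of_bound (27 * (4 * C + 14 * |a| * (|a| + C))) ?_
  filter_upwards [htp, self_mem_nhdsWithin, htp0.eventually_le_const hb,
    htp0.eventually_le_const one_pos,
    hlim.eventually_le_const (by norm_num : (0:ℝ) < 1/8)] with x hx hx0 hxb hx1 hxM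
  have hx0 : 0 < x := hx0
  have hsq : Real.sqrt x ^ 2 = x := Real.sq_sqrt hx0.le
  have h := alg_bound a C (tp x) (Real.sqrt x) hC hx.1 (Real.sqrt_nonneg x) hx1 hxM
    (by rw [hsq]; simpa [hx.2] using hT (tp x) ⟨hx.1.le, hxb⟩)
  rw [hsq] at h
  have hp : x ^ (3/2 : ℝ) = Real.sqrt x ^ 3 := by
    rw [Real.sqrt_eq_rpow, ← Real.rpow_natCast, ← Real.rpow_mul hx0.le]
    norm_num
  rw [Real.norm_eq_abs, Real.norm_eq_abs, hp, abs_of_nonneg (by positivity : 0 ≤ Real.sqrt x ^ 3)]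
  exact h
end

section
/- With $f$, $t_+$, $t_-$ as in the context: $t_-(x) = -2\sqrt{x} - \tfrac{4}{3} f'''(0)\, x + O(x^{3/2})$ as $x \to 0^+$. -/
open Filter Topology Asymptotics
open scoped ContDiff

lemma aux_cd (g : ℝ → ℝ) (m n : WithTop ℕ∞) (h : m + 1 ≤ n) (hg : ContDiffAt ℝ n g 0) :
    ContDiffAt ℝ m (deriv g) 0 := by
  have := (hg.fderiv_right h).clm_apply (contDiffAt_const (c := (1:ℝ)))
  exact this

lemma aux_int (g : ℝ → ℝ) (n : ℕ) (hd : ∀ᶠ t in 𝓝 (0:ℝ), DifferentiableAt ℝ g t) (h0 : g 0 = 0)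
    (h : (deriv g) =O[𝓝 (0:ℝ)] fun t => t ^ n) : g =O[𝓝 (0:ℝ)] fun t => t ^ (n+1) := by
  obtain ⟨C, hC⟩ := h.bound
  obtain ⟨ε, hε, hb⟩ := Metric.eventually_nhds_iff.1 (hC.and hd)
  refine IsBigO.of_bound C (Metric.eventually_nhds_iff.2 ⟨ε, hε, fun t ht => ?_⟩)
  have key := (convex_closedBall (0:ℝ) |t|).norm_image_sub_le_of_norm_deriv_le (f := g)
    (C := C * |t|^n) (x := 0) (y := t) ?_ ?_ (by simp) (by simp)
  · simpa [h0, pow_succ, mul_assoc] using key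
  · intro y hy
    have : |y| ≤ |t| := by simpa using hy
    exact (hb (lt_of_le_of_lt (by simpa using this) ht)).2
  · intro y hy
    have hy' : |y| ≤ |t| := by simpa using hy
    have h1 := (hb (y := y) (lt_of_le_of_lt (by simpa using hy') ht)).1
    have h2 := (hb ht).1
    simp only [norm_pow, Real.norm_eq_abs] at h1 h2 ⊢
    by_cases hC0 : 0 ≤ C
    · exact h1.trans (by gcongr)
    · push Not at hC0
      have : C * |y|^n ≤ 0 := mul_nonpos_of_nonpos_of_nonneg hC0.le (by positivity)
      have e1 : |y|^n = 0 := by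
        have := (abs_nonneg _).trans h1
        have : 0 ≤ |y|^n := by positivity
        nlinarith
      have e2 : |t|^n = 0 := by
        have := (abs_nonneg _).trans h2
        have : 0 ≤ |t|^n := by positivity
        nlinarith
      rw [e1] at h1; rw [e2]; exact h1

lemma aux_taylor (f : ℝ → ℝ) (hf : ContDiffAt ℝ 4 f 0)
    (hf0 : f 0 = 0) (hf1 : deriv f 0 = 0) (hf2 : deriv (deriv f) 0 = 1/2) :
    (fun t => f t - t^2/4 - deriv (deriv (deriv f)) 0 * t^3/6) =O[𝓝 (0:ℝ)] fun t => t ^ 4 := by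
  set c := deriv (deriv (deriv f)) 0 with hc
  have c1 : ContDiffAt ℝ 3 (deriv f) 0 := aux_cd _ 3 4 (by norm_num) hf
  have c2 : ContDiffAt ℝ 2 (deriv (deriv f)) 0 := aux_cd _ 2 3 (by norm_num) c1
  have c3 : ContDiffAt ℝ 1 (deriv (deriv (deriv f))) 0 := aux_cd _ 1 2 (by norm_num) c2
  have d : ∀ (g : ℝ → ℝ) (n : WithTop ℕ∞), n ≠ 0 → n ≠ ∞ → ContDiffAt ℝ n g 0 →
      ∀ᶠ t in 𝓝 (0:ℝ), DifferentiableAt ℝ g t := by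
    intro g n h1 h2 h
    filter_upwards [h.eventually (by simpa using h2)] with t ht
    exact ht.differentiableAt h1
  have d0 := d f 4 (by norm_num) (by decide) hf
  have d1 := d _ 3 (by norm_num) (by decide) c1
  have d2 := d _ 2 (by norm_num) (by decide) c2
  have h3 : (fun t => deriv (deriv (deriv f)) t - c) =O[𝓝 (0:ℝ)] fun t => t ^ 1 := by
    simpa using (c3.differentiableAt (by norm_num)).isBigO_sub
  have h2 : (fun t => deriv (deriv f) t - (1/2 + c * t)) =O[𝓝 (0:ℝ)] fun t => t ^ 2 := by
    refine aux_int _ 1 (d2.mono fun t ht => by fun_prop) (by simp [hf2]) (h3.congr' ?_ .rfl)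
    filter_upwards [d2] with t ht
    rw [deriv_fun_sub ht (by fun_prop)]
    simp
  have h1 : (fun t => deriv f t - (t/2 + c * t^2/2)) =O[𝓝 (0:ℝ)] fun t => t ^ 3 := by
    refine aux_int _ 2 (d1.mono fun t ht => by fun_prop) (by simp [hf1]) (h2.congr' ?_ .rfl)
    filter_upwards [d1] with t ht
    have : HasDerivAt (fun t : ℝ => t/2 + c * t^2/2) (1/2 + c * (2 * t)/2) t := by
      have := ((hasDerivAt_id t).div_const 2).add ((((hasDerivAt_id t).pow 2).const_mul c).div_const 2)
      refine HasDerivAt.congr_deriv this ?_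
      simp
    rw [(ht.hasDerivAt.fun_sub this).deriv]
    ring
  have h0 : (fun t => f t - (t^2/4 + c * t^3/6)) =O[𝓝 (0:ℝ)] fun t => t ^ 4 := by
    refine aux_int _ 3 (d0.mono fun t ht => by fun_prop) (by simp [hf0]) (h1.congr' ?_ .rfl)
    filter_upwards [d0] with t ht
    have : HasDerivAt (fun t : ℝ => t^2/4 + c * t^3/6) (2*t/4 + c * (3 * t^2)/6) t := by
      have := (((hasDerivAt_id t).pow 2).div_const 4).add ((((hasDerivAt_id t).pow 3).const_mul c).div_const 6)
      refine HasDerivAt.congr_deriv this ?_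
      simp
    rw [(ht.hasDerivAt.fun_sub this).deriv]
    ring
  refine h0.congr_left fun t => by ring

lemma aux_alg (c C s u : ℝ) (hs : 0 < s) (hs1 : s ≤ 1) (hu : 0 < u) (hC : 0 ≤ C)
    (hus : u ≤ 4 * s) (hE : |s^2 - u^2/4 + c*u^3/6| ≤ C * u^4) :
    |2*s - u + 4/3*c*s^2| ≤ (512*C + 100 * |c| * (43 * |c| + 1024 * C)) * s^3 := by
  set E := s^2 - u^2/4 + c*u^3/6 with hEd
  have hu3 : u^3 ≤ 64 * s^3 := by
    calc u^3 ≤ (4*s)^3 := by gcongr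
      _ = _ := by ring
  have hu4 : u^4 ≤ 256 * s^4 := by
    calc u^4 ≤ (4*s)^4 := by gcongr
      _ = _ := by ring
  have hE' : |E| ≤ 256 * C * s^4 := hE.trans (by nlinarith)
  have hw : |2*s-u| ≤ (43 * |c| + 1024 * C) * s^2 := by
    have e : (2*s-u)*(2*s+u) = 4*E - 2/3*c*u^3 := by rw [hEd]; ring
    have e2 : |2*s-u| * (2*s+u) = |4*E - 2/3*c*u^3| := by
      rw [← e, abs_mul, abs_of_pos (show 0 < 2*s+u by positivity)]
    have e3 : |4*E - 2/3*c*u^3| ≤ 4 * |E| + 2/3 * |c| * u^3 := by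
      refine (abs_sub _ _).trans (le_of_eq ?_)
      rw [abs_mul, abs_mul, abs_mul, abs_of_pos (show 0 < u^3 by positivity)]; norm_num
    have e4 : |c| * u^3 ≤ |c| * (64*s^3) := by gcongr
    have e5 : C*s^4 ≤ C*s^3 := mul_le_mul_of_nonneg_left (pow_le_pow_of_le_one hs.le hs1 (by norm_num)) hC
    have e6 : |2*s-u| * s ≤ |2*s-u| * (2*s+u) := by gcongr; linarith
    have e7 : 0 ≤ |c| * s^3 := by positivity
    refine le_of_mul_le_mul_right ?_ hs
    nlinarith
  have e : (2*s - u + 4/3*c*s^2)*(2*s+u) = 4*E + c*(2*s-u)*(2/3*u^2+4/3*u*s+4/3*s^2) := by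
    rw [hEd]; ring
  set W := 43 * |c| + 1024 * C with hW
  have hW0 : 0 ≤ W := by positivity
  have hq : 2/3*u^2+4/3*u*s+4/3*s^2 ≤ 100 * s^2 := by nlinarith
  have hq0 : 0 < 2/3*u^2+4/3*u*s+4/3*s^2 := by positivity
  have e2 : |2*s - u + 4/3*c*s^2| * (2*s+u) ≤ 4 * |E| + |c| * |2*s-u| * (2/3*u^2+4/3*u*s+4/3*s^2) := by
    rw [← abs_of_pos (show 0 < 2*s+u by positivity), ← abs_mul, e]
    refine (abs_add_le _ _).trans (le_of_eq ?_)
    rw [abs_mul, abs_mul, abs_mul, abs_of_pos hq0]; norm_num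
  have e3 : |c| * |2*s-u| * (2/3*u^2+4/3*u*s+4/3*s^2) ≤ |c| * (W * s^2) * (100 * s^2) := by gcongr
  have e6 : |2*s - u + 4/3*c*s^2| * (2*s) ≤ |2*s - u + 4/3*c*s^2| * (2*s+u) := by gcongr; linarith
  have e7 : 0 ≤ |c| * W * s^4 := by positivity
  refine le_of_mul_le_mul_right ?_ (show 0 < 2*s by positivity)
  nlinarith

theorem stmt_5 (f tp tm : ℝ → ℝ)
    (hf : ContDiffAt ℝ 4 f 0)
    (hf0 : f 0 = 0) (hf1 : deriv f 0 = 0) (hf2 : deriv (deriv f) 0 = 1/2)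
    (hfpos : ∀ᶠ t in 𝓝 (0:ℝ), 0 < deriv (deriv f) t)
    (htp : ∀ᶠ x in 𝓝[>] (0:ℝ), 0 < tp x ∧ f (tp x) = x)
    (htm : ∀ᶠ x in 𝓝[>] (0:ℝ), tm x < 0 ∧ f (tm x) = x)
    (htp0 : Tendsto tp (𝓝[>] (0:ℝ)) (𝓝 0))
    (htm0 : Tendsto tm (𝓝[>] (0:ℝ)) (𝓝 0)) :
    (fun x => tm x - (-2 * Real.sqrt x - 4/3 * deriv (deriv (deriv f)) 0 * x))
      =O[𝓝[>] (0:ℝ)] fun x => x ^ (3/2 : ℝ) := by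
  set c := deriv (deriv (deriv f)) 0 with hc
  obtain ⟨C, hC0, hC⟩ := (aux_taylor f hf hf0 hf1 hf2).exists_nonneg
  have hB := htm0.eventually hC.bound
  have hδ : 0 < 1 / (8 * (|c| + C + 1)) := by positivity
  have hsm : ∀ᶠ x in 𝓝[>] (0:ℝ), |tm x| < 1 / (8 * (|c| + C + 1)) := by
    have := htm0.eventually (Metric.ball_mem_nhds 0 hδ)
    filter_upwards [this] with x hx
    simpa using hx
  have hx1 : ∀ᶠ x in 𝓝[>] (0:ℝ), x < 1 := nhdsWithin_le_nhds (gt_mem_nhds one_pos)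
  refine IsBigO.of_bound (512*C + 100 * |c| * (43 * |c| + 1024 * C)) ?_
  filter_upwards [hB, hsm, hx1, htm, self_mem_nhdsWithin] with x hb hs hx1 ht hx0
  have hx0 : 0 < x := hx0
  obtain ⟨ht, hft⟩ := ht
  have hsp : 0 < √x := Real.sqrt_pos.2 hx0
  have hsq : √x ^ 2 = x := Real.sq_sqrt hx0.le
  have hs1 : √x ≤ 1 := Real.sqrt_le_one.2 hx1.le
  have hpow : x ^ (3/2 : ℝ) = √x ^ 3 := by
    rw [Real.sqrt_eq_rpow, ← Real.rpow_natCast, ← Real.rpow_mul hx0.le]; norm_num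
  rw [hpow, Real.norm_eq_abs, Real.norm_eq_abs, abs_of_pos (show 0 < √x ^ 3 by positivity)]
  obtain ⟨u, hu⟩ : ∃ u, u = - tm x := ⟨_, rfl⟩
  have htu : tm x = -u := by linarith
  have hu0 : 0 < u := by linarith
  rw [hft, htu, Real.norm_eq_abs, Real.norm_eq_abs, abs_of_pos (show 0 < (-u)^4 by rw [Even.neg_pow (by decide)]; positivity)] at hb
  rw [htu, abs_neg, abs_of_pos hu0, lt_div_iff₀ (by positivity)] at hs
  have hE : |√x^2 - u^2/4 + c*u^3/6| ≤ C * u^4 := by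
    rw [← hc] at hb; rw [hsq]; convert hb using 2 <;> ring
  have hus : u ≤ 4 * √x := by
    have a1 := (abs_le.1 hE).1
    have a2 : c * u^3 ≤ |c| * u^3 := by gcongr; exact le_abs_self c
    have hcu : 0 ≤ |c| * u := by positivity
    have hCu : 0 ≤ C * u := by positivity
    have hu1 : u ≤ 1 := by nlinarith
    have a3 : |c| * u^3 ≤ u^2 / 8 := by
      have : |c| * u ≤ 1/8 := by nlinarith
      nlinarith [sq_nonneg u]
    have a4 : C * u^4 ≤ u^2 / 8 := by
      have : C * u ≤ 1/8 := by nlinarith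
      have : C * u * u ≤ 1/8 := by nlinarith
      nlinarith [sq_nonneg u]
    refine le_of_sq_le_sq ?_ (by positivity)
    nlinarith [sq_nonneg u]
  have := aux_alg c C (√x) u hsp hs1 hu0 hC0 hus hE
  convert this using 2
  rw [htu, hsq]; ring
end

section
/- With $f$, $t_+$ as in the context: $\dfrac{1}{f'(t_+(x))} = \dfrac{1}{\sqrt{x}} - \dfrac{4 f'''(0)}{3} + O(\sqrt{x})$ as $x \to 0^+$. (This quantity is the derivative $r_{x_2}$ of the distance $r$ from $(0,x)$ to the boundary graph in the direction $(1,0)$.) -/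
open Filter Topology Asymptotics

lemma aux_int_s8 (g : ℝ → ℝ) (n : ℕ) (K : ℝ) (g0 : g 0 = 0)
    (hd : ∀ᶠ t in 𝓝 (0:ℝ), DifferentiableAt ℝ g t)
    (hb : ∀ᶠ t in 𝓝 (0:ℝ), |deriv g t| ≤ K * |t| ^ n) (hK : 0 ≤ K) :
    ∀ᶠ t in 𝓝 (0:ℝ), |g t| ≤ K * |t| ^ (n+1) := by
  obtain ⟨e, he, h⟩ := Metric.eventually_nhds_iff_ball.1 (hd.and hb)
  refine Metric.eventually_nhds_iff_ball.2 ⟨e, he, fun t ht => ?_⟩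
  have hsub : ∀ y ∈ Metric.closedBall (0:ℝ) |t|, y ∈ Metric.ball (0:ℝ) e := by
    intro y hy
    simp only [Metric.mem_closedBall, Metric.mem_ball, dist_zero_right, Real.norm_eq_abs] at *
    linarith
  have := (convex_closedBall (0:ℝ) |t|).norm_image_sub_le_of_norm_deriv_le (f := g)
    (C := K * |t| ^ n) (x := 0) (y := t)
    (fun y hy => (h y (hsub y hy)).1)
    (fun y hy => by
      refine ((h y (hsub y hy)).2).trans ?_
      have : |y| ≤ |t| := by simpa using hy
      gcongr) (by simp) (by simp)
  simp only [g0, sub_zero, Real.norm_eq_abs] at this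
  rw [pow_succ, ← mul_assoc]
  exact this

lemma aux_exp (f : ℝ → ℝ) (hf : ContDiffAt ℝ 4 f 0)
    (hf0 : f 0 = 0) (hf1 : deriv f 0 = 0) (hf2 : deriv (deriv f) 0 = 1/2) :
    ∃ K : ℝ, 0 ≤ K ∧ ∀ᶠ t in 𝓝 (0:ℝ),
      |deriv f t - (t/2 + deriv (deriv (deriv f)) 0 * t^2/2)| ≤ K * |t|^3 ∧
      |f t - (t^2/4 + deriv (deriv (deriv f)) 0 * t^3/6)| ≤ K * |t|^4 := by
  set c := deriv (deriv (deriv f)) 0 with hc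
  have h1 : ContDiffAt ℝ 3 (deriv f) 0 := hf.derivWithin (by norm_num)
  have h2 : ContDiffAt ℝ 2 (deriv (deriv f)) 0 := h1.derivWithin (by norm_num)
  have h3 : ContDiffAt ℝ 1 (deriv (deriv (deriv f))) 0 := h2.derivWithin (by norm_num)
  have ev : ∀ (g : ℝ → ℝ) (n : ℕ), n ≠ 0 → ContDiffAt ℝ n g 0 →
      ∀ᶠ t in 𝓝 (0:ℝ), DifferentiableAt ℝ g t := by
    intro g n hn hg
    filter_upwards [hg.eventually (by simp)] with t ht
    exact ht.differentiableAt (by exact_mod_cast hn)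
  have d0 := ev f 4 (by norm_num) (by exact_mod_cast hf)
  have d1 := ev _ 3 (by norm_num) (by exact_mod_cast h1)
  have d2 := ev _ 2 (by norm_num) (by exact_mod_cast h2)
  have hO := (h3.differentiableAt (by norm_num)).isBigO_sub
  obtain ⟨K, hK, hb⟩ := hO.exists_nonneg
  have b3 : ∀ᶠ t in 𝓝 (0:ℝ), |deriv (fun t => deriv (deriv f) t - (1/2 + c * t)) t| ≤ K * |t|^1 := by
    filter_upwards [hb.bound, d2] with t ht hd
    have : HasDerivAt (fun t => deriv (deriv f) t - (1/2 + c * t))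
        (deriv (deriv (deriv f)) t - c) t := by
      refine HasDerivAt.congr_deriv (hd.hasDerivAt.sub (((hasDerivAt_id t).const_mul c).const_add (1/2))) ?_
      simp
    rw [this.deriv]
    simpa using ht
  have b2 := aux_int_s8 _ 1 K (by simp [hf2]) (by
    filter_upwards [d2] with t ht
    fun_prop) b3 hK
  have b2' : ∀ᶠ t in 𝓝 (0:ℝ), |deriv (fun t => deriv f t - (t/2 + c * t^2/2)) t| ≤ K * |t|^2 := by
    filter_upwards [b2, d1] with t ht hd
    have : HasDerivAt (fun t => deriv f t - (t/2 + c * t^2/2))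
        (deriv (deriv f) t - (1/2 + c * t)) t := by
      refine HasDerivAt.congr_deriv (hd.hasDerivAt.sub (((hasDerivAt_id t).div_const 2).add
        (((hasDerivAt_pow 2 t).const_mul c).div_const 2))) ?_
      norm_num; try ring
    rw [this.deriv]
    exact ht
  have b1 := aux_int_s8 _ 2 K (by simp [hf1]) (by
    filter_upwards [d1] with t ht
    fun_prop) b2' hK
  have b1' : ∀ᶠ t in 𝓝 (0:ℝ), |deriv (fun t => f t - (t^2/4 + c * t^3/6)) t| ≤ K * |t|^3 := by
    filter_upwards [b1, d0] with t ht hd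
    have : HasDerivAt (fun t => f t - (t^2/4 + c * t^3/6))
        (deriv f t - (t/2 + c * t^2/2)) t := by
      refine HasDerivAt.congr_deriv (hd.hasDerivAt.sub (((hasDerivAt_pow 2 t).div_const 4).add
        (((hasDerivAt_pow 3 t).const_mul c).div_const 6))) ?_
      norm_num; try ring
    rw [this.deriv]
    exact ht
  have b0 := aux_int_s8 _ 3 K (by simp [hf0]) (by
    filter_upwards [d0] with t ht
    fun_prop) b1' hK
  exact ⟨K, hK, b1.and b0⟩

set_option maxHeartbeats 1000000 in
lemma aux_alg_s8 (c K t F s : ℝ) (hK : 0 ≤ K) (ht : 0 < t) (hs : 0 ≤ s)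
    (ht1 : t * (1 + |c| + 4 * (K + c^2)) ≤ 1/8)
    (hF : |F - (t/2 + c * t^2/2)| ≤ K * t^3)
    (hS : |s^2 - (t^2/4 + c * t^3/6)| ≤ K * t^4) :
    |1 / F - (1 / s - 4 * c / 3)| ≤ 64 * (5 * (K + c^2) + 2 * |c| * (|c| + 4 * (K + c^2))) * 4 * s := by
  obtain ⟨L, hL⟩ : ∃ L, L = K + c^2 := ⟨_, rfl⟩
  rw [← hL] at ht1 ⊢
  have hL0 : 0 ≤ L := by rw [hL]; positivity
  have hKL : K ≤ L := by nlinarith [sq_nonneg c]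
  have hc0 := abs_nonneg c
  have htc : t * |c| ≤ 1/8 := by nlinarith [mul_nonneg ht.le hL0]
  have htL : t * (4 * L) ≤ 1/8 := by nlinarith [mul_nonneg ht.le hc0]
  have ht8 : t ≤ 1/8 := by nlinarith [mul_nonneg ht.le hc0, mul_nonneg ht.le hL0]
  obtain ⟨M, hM⟩ : ∃ M, M = |c| + 4 * L := ⟨_, rfl⟩
  rw [← hM]
  have hM0 : 0 ≤ M := by rw [hM]; positivity
  have htM : t * M ≤ 1/8 := by nlinarith
  have hct : |c * t^2| ≤ |c| * t^2 := by rw [abs_mul, abs_of_nonneg (sq_nonneg t)]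
  have ht3 : t^3 ≤ t^2 := by nlinarith [sq_nonneg t]
  have ht2 : 0 < t^2 := by positivity
  have hMt2 : M * t^2 ≤ t/8 := by nlinarith
  have hct2 : |c| * t^2 ≤ t/8 := by nlinarith
  obtain ⟨hc1, hc2⟩ := abs_le.1 hct
  -- expansion of s
  have hs3 : |s - (t/2 + c*t^2/6)| ≤ 4 * L * t^3 := by
    have e : (s - (t/2 + c*t^2/6)) * (s + (t/2 + c*t^2/6))
        = (s^2 - (t^2/4 + c * t^3/6)) - c^2 * t^4/36 := by ring
    have hp : t/4 ≤ s + (t/2 + c*t^2/6) := by linarith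
    have h4 : |(s - (t/2 + c*t^2/6)) * (s + (t/2 + c*t^2/6))| ≤ L * t^4 := by
      rw [e]
      have : 0 ≤ c^2 * t^4 := by positivity
      obtain ⟨p, q⟩ := abs_le.1 hS
      rw [abs_le]; constructor <;> rw [hL] <;> linarith
    rw [abs_mul, abs_of_nonneg (by linarith : 0 ≤ s + (t/2 + c*t^2/6))] at h4
    have h5 := mul_le_mul_of_nonneg_left hp (abs_nonneg (s - (t/2 + c*t^2/6)))
    have h6 : |s - (t/2 + c*t^2/6)| * t ≤ (4 * L * t^3) * t := by nlinarith
    exact le_of_mul_le_mul_right h6 ht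
  have hF3 : |F - (t/2 + c * t^2/2)| ≤ L * t^3 := hF.trans (by gcongr)
  have hL3 : L * t^3 ≤ L * t^2 := by gcongr
  have hL30 : 0 ≤ L * t^3 := by positivity
  have hF2 : |F - t/2| ≤ M * t^2 := by
    obtain ⟨p, q⟩ := abs_le.1 hF3
    have : M * t^2 = |c| * t^2 + 4 * (L * t^2) := by rw [hM]; ring
    rw [abs_le]; constructor <;> linarith [mul_nonneg hc0 ht2.le]
  have hs2 : |s - t/2| ≤ M * t^2 := by
    obtain ⟨p, q⟩ := abs_le.1 hs3
    have : M * t^2 = |c| * t^2 + 4 * (L * t^2) := by rw [hM]; ring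
    rw [abs_le]; constructor <;> linarith [mul_nonneg hc0 ht2.le]
  obtain ⟨F1, F2⟩ := abs_le.1 hF2
  obtain ⟨s1, s2⟩ := abs_le.1 hs2
  have Fl : t/4 ≤ F := by linarith
  have Fu : F ≤ t := by linarith
  have sl : t/4 ≤ s := by linarith
  have Fp : 0 < F := by linarith
  have sp : 0 < s := by linarith
  have hFs : |F * s - t^2/4| ≤ (3/2) * M * t^3 := by
    have e : F * s - t^2/4 = F * (s - t/2) + t/2 * (F - t/2) := by ring
    rw [e]
    refine (abs_add_le _ _).trans ?_
    rw [abs_mul, abs_mul, abs_of_pos Fp, abs_of_pos (by linarith : 0 < t/2)]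
    have a1 : F * |s - t/2| ≤ t * (M * t^2) := by gcongr
    have a2 : t/2 * |F - t/2| ≤ t/2 * (M * t^2) := by gcongr
    linarith
  have key : 1 / F - (1 / s - 4 * c / 3) = 
      ((s - (t/2 + c*t^2/6)) - (F - (t/2 + c * t^2/2)) + 4*c/3 * (F * s - t^2/4)) / (F * s) := by
    field_simp
    ring
  have num : |(s - (t/2 + c*t^2/6)) - (F - (t/2 + c * t^2/2)) + 4*c/3 * (F * s - t^2/4)|
      ≤ (5 * L + 2 * |c| * M) * t^3 := by
    refine (abs_add_le _ _).trans ?_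
    have a1 := abs_sub (s - (t/2 + c*t^2/6)) (F - (t/2 + c * t^2/2))
    have a2 : |4*c/3 * (F * s - t^2/4)| ≤ 4/3 * |c| * ((3/2) * M * t^3) := by
      rw [abs_mul, show |4*c/3| = 4/3*|c| by
        rw [show 4*c/3 = 4/3*c by ring, abs_mul]; norm_num]
      gcongr
    linarith
  have den : t^2/16 ≤ F * s := by nlinarith
  have hQ : 0 ≤ 5 * L + 2 * |c| * M := by positivity
  rw [key, abs_div, abs_of_pos (mul_pos Fp sp), div_le_iff₀ (mul_pos Fp sp)]
  refine num.trans ?_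
  have : 64 * (5 * L + 2 * |c| * M) * 4 * (t/4) * (t^2/16)
      ≤ 64 * (5 * L + 2 * |c| * M) * 4 * s * (F * s) := by gcongr
  have : 0 ≤ (5 * L + 2 * |c| * M) * t^3 := by positivity
  linarith

theorem stmt_8 (f tp tm : ℝ → ℝ)
    (hf : ContDiffAt ℝ 4 f 0)
    (hf0 : f 0 = 0) (hf1 : deriv f 0 = 0) (hf2 : deriv (deriv f) 0 = 1/2)
    (hfpos : ∀ᶠ t in 𝓝 (0:ℝ), 0 < deriv (deriv f) t)
    (htp : ∀ᶠ x in 𝓝[>] (0:ℝ), 0 < tp x ∧ f (tp x) = x)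
    (htm : ∀ᶠ x in 𝓝[>] (0:ℝ), tm x < 0 ∧ f (tm x) = x)
    (htp0 : Tendsto tp (𝓝[>] (0:ℝ)) (𝓝 0))
    (htm0 : Tendsto tm (𝓝[>] (0:ℝ)) (𝓝 0)) :
    (fun x => 1 / deriv f (tp x) - (1 / Real.sqrt x - 4 * deriv (deriv (deriv f)) 0 / 3))
      =O[𝓝[>] (0:ℝ)] fun x => Real.sqrt x := by
  obtain ⟨K, hK, h⟩ := aux_exp f hf hf0 hf1 hf2
  set c := deriv (deriv (deriv f)) 0 with hc
  have hsmall : ∀ᶠ t in 𝓝 (0:ℝ), t * (1 + |c| + 4 * (K + c^2)) ≤ 1/8 := by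
    have : Tendsto (fun t : ℝ => t * (1 + |c| + 4 * (K + c^2))) (𝓝 0) (𝓝 0) := by
      have := (continuous_mul_const (1 + |c| + 4 * (K + c^2))).tendsto (0:ℝ)
      simpa using this
    exact this.eventually_le_const (by norm_num)
  refine IsBigO.of_bound (64 * (5 * (K + c^2) + 2 * |c| * (|c| + 4 * (K + c^2))) * 4) ?_
  filter_upwards [htp, htp0.eventually h, htp0.eventually hsmall, self_mem_nhdsWithin]
    with x ⟨h1, h2⟩ ⟨h3, h4⟩ h5 hx
  have hx0 : (0:ℝ) ≤ x := le_of_lt hx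
  rw [abs_of_pos h1] at h3 h4
  rw [h2] at h4
  rw [Real.norm_eq_abs, Real.norm_eq_abs, abs_of_nonneg (Real.sqrt_nonneg x)]
  exact aux_alg_s8 c K (tp x) _ _ hK h1 (Real.sqrt_nonneg x) h5 h3 (by rwa [Real.sq_sqrt hx0])
end

section
/- With $f$, $t_+$ as in the context: $\dfrac{1}{t_+(x)^2} = \dfrac{1}{4x} + \dfrac{f'''(0)}{3\sqrt{x}} + O(1)$ as $x \to 0^+$. (This quantity is the derivative $\Theta_{x_1}((0,x),(1,0))$ of the Funk metric.) -/
open Filter Topology Asymptotics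

lemma taylor_aux (f : ℝ → ℝ)
    (hf : ContDiffAt ℝ 4 f 0)
    (hf0 : f 0 = 0) (hf1 : deriv f 0 = 0) (hf2 : deriv (deriv f) 0 = 1/2) :
    ∃ a > 0, ∃ M ≥ 0, ∀ t ∈ Set.Icc (0:ℝ) a,
      |f t - (t ^ 2 / 4 + deriv (deriv (deriv f)) 0 * t ^ 3 / 6)| ≤ M * t ^ 4 := by
  have h1 : ∀ᶠ y in 𝓝 (0:ℝ), ContDiffAt ℝ 4 f y := hf.eventually (by simp)
  obtain ⟨e, he, h2⟩ := Metric.eventually_nhds_iff.1 h1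
  have ha : 0 < e / 2 := by linarith
  have hon : ContDiffOn ℝ ((3:ℕ) + 1) f (Set.Icc 0 (e / 2)) := by
    intro y hy
    have : ContDiffAt ℝ 4 f y := by
      apply h2
      rw [Real.dist_eq, sub_zero, abs_of_nonneg hy.1]
      linarith [hy.2]
    have h3 := this.contDiffWithinAt (s := Set.Icc 0 (e/2))
    norm_num
    exact h3
  obtain ⟨C, hC⟩ := exists_taylor_mean_remainder_bound ha.le hon
  refine ⟨e / 2, ha, |C|, abs_nonneg _, fun t ht => ?_⟩
  have h4 := hC t ht
  have hid : ∀ k : ℕ, k ≤ 4 → iteratedDerivWithin k f (Set.Icc 0 (e/2)) 0 = iteratedDeriv k f 0 := by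
    intro k hk
    apply iteratedDerivWithin_eq_iteratedDeriv (uniqueDiffOn_Icc ha)
    · exact hf.of_le (by exact_mod_cast hk)
    · exact ⟨le_rfl, ha.le⟩
  rw [taylor_within_apply] at h4
  simp only [Finset.sum_range_succ, Finset.sum_range_zero] at h4
  rw [hid 0 (by norm_num), hid 1 (by norm_num), hid 2 (by norm_num), hid 3 (by norm_num)] at h4
  simp only [iteratedDeriv_succ, iteratedDeriv_zero, hf0, hf1, hf2, Real.norm_eq_abs, sub_zero,
    smul_eq_mul, Nat.factorial] at h4
  have e4 : C * t ^ (3 + 1) ≤ |C| * t ^ 4 :=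
    mul_le_mul_of_nonneg_right (le_abs_self C) (pow_nonneg ht.1 _)
  refine le_trans (le_of_eq ?_) (h4.trans e4)
  congr 1
  push_cast
  ring

lemma alg_aux (c M t s R : ℝ) (ht : 0 < t) (hs : 0 < s) (hM : 0 ≤ M)
    (hR : |R| ≤ M * t ^ 4) (hx : s ^ 2 = t ^ 2 / 4 + c * t ^ 3 / 6 + R)
    (hlow : t ^ 2 / 8 ≤ s ^ 2) (ht1 : t ≤ 1) :
    |1 / t ^ 2 - (1 / (4 * s ^ 2) + c / (3 * s))| ≤ 8 * M + |c| * (2 * |c| / 3 + 4 * M) * 2 := by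
  have e1 : 1 / t ^ 2 - (1 / (4 * s ^ 2) + c / (3 * s)) =
      R / (s ^ 2 * t ^ 2) - c * (2 * c * t ^ 3 / 3 + 4 * R) / ((t + 2 * s) * (6 * s ^ 2)) := by
    have hRe : R = s ^ 2 - t ^ 2 / 4 - c * t ^ 3 / 6 := by linarith
    have : t + 2 * s ≠ 0 := by positivity
    rw [hRe]
    field_simp
    ring
  have b1 : |R / (s ^ 2 * t ^ 2)| ≤ 8 * M := by
    rw [abs_div, abs_of_pos (by positivity : 0 < s ^ 2 * t ^ 2), div_le_iff₀ (by positivity)]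
    have : M * t ^ 2 * (t ^ 2 / 8) ≤ M * t ^ 2 * s ^ 2 :=
      mul_le_mul_of_nonneg_left hlow (by positivity)
    nlinarith
  have b2 : |2 * c * t ^ 3 / 3 + 4 * R| ≤ (2 * |c| / 3 + 4 * M) * t ^ 3 := by
    have : |2 * c * t ^ 3 / 3| = 2 * |c| / 3 * t ^ 3 := by
      rw [abs_div, abs_mul, abs_mul, abs_of_pos (by positivity : 0 < t ^ 3)]
      norm_num
      ring
    have h4 : M * t ^ 4 ≤ M * t ^ 3 :=
      mul_le_mul_of_nonneg_left (pow_le_pow_of_le_one ht.le ht1 (by norm_num)) hM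
    have h5 : |4 * R| = 4 * |R| := by rw [abs_mul]; norm_num
    have := abs_add_le (2 * c * t ^ 3 / 3) (4 * R)
    nlinarith
  have b3 : |c * (2 * c * t ^ 3 / 3 + 4 * R) / ((t + 2 * s) * (6 * s ^ 2))|
      ≤ |c| * (2 * |c| / 3 + 4 * M) * 2 := by
    have hK : 0 ≤ |c| * (2 * |c| / 3 + 4 * M) := by positivity
    rw [abs_div, abs_of_pos (by positivity : 0 < (t + 2 * s) * (6 * s ^ 2)),
      div_le_iff₀ (by positivity), abs_mul]
    have h6 : t * (6 * (t ^ 2 / 8)) ≤ (t + 2 * s) * (6 * s ^ 2) := by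
      gcongr
      linarith
    have h7 : t ^ 3 ≤ 2 * ((t + 2 * s) * (6 * s ^ 2)) := by
      have : 0 < t ^ 3 := by positivity
      nlinarith
    calc _ ≤ |c| * ((2 * |c| / 3 + 4 * M) * t ^ 3) := by gcongr
      _ = |c| * (2 * |c| / 3 + 4 * M) * t ^ 3 := by ring
      _ ≤ |c| * (2 * |c| / 3 + 4 * M) * (2 * ((t + 2 * s) * (6 * s ^ 2))) := by gcongr
      _ = _ := by ring
  rw [e1]
  exact (abs_sub _ _).trans (add_le_add b1 b3)

theorem stmt_10 (f tp tm : ℝ → ℝ)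
    (hf : ContDiffAt ℝ 4 f 0)
    (hf0 : f 0 = 0) (hf1 : deriv f 0 = 0) (hf2 : deriv (deriv f) 0 = 1/2)
    (hfpos : ∀ᶠ t in 𝓝 (0:ℝ), 0 < deriv (deriv f) t)
    (htp : ∀ᶠ x in 𝓝[>] (0:ℝ), 0 < tp x ∧ f (tp x) = x)
    (htm : ∀ᶠ x in 𝓝[>] (0:ℝ), tm x < 0 ∧ f (tm x) = x)
    (htp0 : Tendsto tp (𝓝[>] (0:ℝ)) (𝓝 0))
    (htm0 : Tendsto tm (𝓝[>] (0:ℝ)) (𝓝 0)) :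
    (fun x => 1 / (tp x) ^ 2 - (1 / (4 * x) + deriv (deriv (deriv f)) 0 / (3 * Real.sqrt x)))
      =O[𝓝[>] (0:ℝ)] fun _ => (1:ℝ) := by
  obtain ⟨a, ha, M, hM, hT⟩ := taylor_aux f hf hf0 hf1 hf2
  set c := deriv (deriv (deriv f)) 0
  have hb : 0 < min (min a 1) (1 / (8 * (|c| / 6 + M + 1))) := by positivity
  refine IsBigO.of_bound (8 * M + |c| * (2 * |c| / 3 + 4 * M) * 2) ?_
  filter_upwards [htp, htp0.eventually (gt_mem_nhds hb), self_mem_nhdsWithin] with x hx hlt hx0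
  obtain ⟨ht, hfx⟩ := hx
  have hx0 : 0 < x := hx0
  have hta : tp x < a := hlt.trans_le ((min_le_left _ _).trans (min_le_left _ _))
  have ht1 : tp x < 1 := hlt.trans_le ((min_le_left _ _).trans (min_le_right _ _))
  have ht2 : tp x < 1 / (8 * (|c| / 6 + M + 1)) := hlt.trans_le (min_le_right _ _)
  rw [lt_div_iff₀ (by positivity)] at ht2
  have hR := hT (tp x) ⟨ht.le, hta.le⟩
  rw [hfx] at hR
  have hs : Real.sqrt x ^ 2 = x := Real.sq_sqrt hx0.le
  generalize tp x = t at *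
  have key := alg_aux c M t (Real.sqrt x) (x - (t ^ 2 / 4 + c * t ^ 3 / 6)) ht
    (Real.sqrt_pos.2 hx0) hM hR (by rw [hs]; ring) ?_ ht1.le
  · rw [hs] at key
    simpa using key
  · rw [hs]
    have h1 := (abs_le.1 hR).1
    have h2 : -(|c| * t ^ 3) ≤ c * t ^ 3 := by
      have := mul_le_mul_of_nonneg_right (neg_abs_le c) (by positivity : 0 ≤ t ^ 3)
      linarith
    have h4 : M * t ^ 4 ≤ M * t ^ 3 :=
      mul_le_mul_of_nonneg_left (pow_le_pow_of_le_one ht.le ht1.le (by norm_num)) hM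
    have h5 : t ^ 2 * (t * (8 * (|c| / 6 + M + 1))) ≤ t ^ 2 * 1 :=
      mul_le_mul_of_nonneg_left ht2.le (by positivity)
    have h6 : 0 < t ^ 3 := by positivity
    nlinarith
end

section
/- With $f$, $t_+$ as in the context: $\dfrac{2}{t_+(x)^3\, f'(t_+(x))^2} + \dfrac{f''(t_+(x))}{t_+(x)^2\, f'(t_+(x))^3} = \dfrac{3}{8 x^{5/2}} + O\big(x^{-3/2}\big)$ as $x \to 0^+$. (This quantity is the second derivative $\Theta_{x_2 x_2}((0,x),(1,0))$ of the Funk metric, via $\Theta_{x_2x_2} = 2\Theta^3 r_{x_2}^2 - \Theta^2 r_{x_2x_2}$.) -/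
open Filter Topology Asymptotics

lemma int_bigO (h h' : ℝ → ℝ) (n : ℕ) (hd : ∀ᶠ t in 𝓝 (0:ℝ), HasDerivAt h (h' t) t)
    (h0 : h 0 = 0) (hO : h' =O[𝓝 0] fun t => t ^ n) : h =O[𝓝 0] fun t => t ^ (n+1) := by
  obtain ⟨C, hC⟩ := hO.bound
  obtain ⟨ε, hε, H⟩ := Metric.eventually_nhds_iff.1 (hd.and hC)
  refine IsBigO.of_bound C (Metric.eventually_nhds_iff.2 ⟨ε, hε, fun t ht => ?_⟩)
  have hs : ∀ y ∈ Set.uIcc 0 t, |y| ≤ |t| := fun y hy => by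
    simpa using Set.abs_sub_left_of_mem_uIcc hy
  have hCn : ∀ y ∈ Set.uIcc 0 t, ‖h' y‖ ≤ |C| * |t| ^ n := fun y hy => by
    have h1 := (H (y := y) (by
      have := hs y hy
      simp only [Real.dist_eq, sub_zero] at ht ⊢; linarith)).2
    refine h1.trans ?_
    rw [norm_pow, Real.norm_eq_abs]
    have := hs y hy
    gcongr
    exact le_abs_self C
  have hC0 : ‖h' t‖ ≤ C * |t| ^ n := by
    have := (H ht).2
    rwa [norm_pow, Real.norm_eq_abs] at this
  by_cases ht0 : t = 0
  · subst ht0; simp [h0]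
  have hCnn : 0 ≤ C := by
    have h1 := (norm_nonneg _).trans hC0
    exact nonneg_of_mul_nonneg_left h1 (by positivity)
  rw [abs_of_nonneg hCnn] at hCn
  have := Convex.norm_image_sub_le_of_norm_hasDerivWithin_le (f := h) (f' := h')
    (s := Set.uIcc 0 t) (x := 0) (y := t) (C := C * |t| ^ n)
    (fun y hy => ((H (y := y) (by
      have := hs y hy
      simp only [Real.dist_eq, sub_zero] at ht ⊢; linarith)).1).hasDerivWithinAt)
    hCn (convex_uIcc 0 t) Set.left_mem_uIcc Set.right_mem_uIcc
  rw [h0, sub_zero, sub_zero] at this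
  rw [norm_pow, pow_succ, ← mul_assoc]
  exact this

lemma cd_deriv (g : ℝ → ℝ) (m n : ℕ) (hg : ContDiffAt ℝ n g 0) (h : m + 1 ≤ n) :
    ContDiffAt ℝ m (deriv g) 0 := by
  have h1 : ContDiffAt ℝ m (fderiv ℝ g) 0 := hg.fderiv_right (by exact_mod_cast h)
  have h2 := h1.clm_apply (contDiffAt_const (c := (1:ℝ)))
  exact h2

lemma taylor2 (g : ℝ → ℝ) (hg : ContDiffAt ℝ 2 g 0) :
    (fun t => g t - g 0 - deriv g 0 * t) =O[𝓝 0] fun t => t ^ 2 := by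
  have hd : ∀ᶠ t in 𝓝 (0:ℝ), HasDerivAt g (deriv g t) t := by
    filter_upwards [hg.eventually (by simp)] with t ht
    exact (ht.differentiableAt (by simp)).hasDerivAt
  have h2 : DifferentiableAt ℝ (deriv g) 0 :=
    (cd_deriv g 1 2 hg (by norm_num)).differentiableAt (by simp)
  refine int_bigO _ (fun t => deriv g t - deriv g 0) 1 ?_ (by simp) ?_
  · filter_upwards [hd] with t ht
    exact ((ht.sub_const (g 0)).sub ((hasDerivAt_id t).const_mul (deriv g 0))).congr_deriv (by simp)
  · simpa using h2.isBigO_sub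

lemma rpow_exp (s c : ℝ) (y : ℝ → ℝ)
    (hy : (fun t => y t - 1 - c * t) =O[𝓝[>] 0] fun t => t ^ 2) :
    (fun t => y t ^ s - 1 - s * c * t) =O[𝓝[>] 0] fun t => t ^ 2 := by
  have hid : Tendsto (fun t : ℝ => t) (𝓝[>] 0) (𝓝 0) := tendsto_nhdsWithin_of_tendsto_nhds tendsto_id
  have ht2 : (fun t : ℝ => t ^ 2) =O[𝓝[>] 0] fun t => t := by
    have : (fun t : ℝ => t * t) =O[𝓝[>] 0] fun t => (1:ℝ) * t :=
      (hid.isBigO_one ℝ).mul (isBigO_refl _ _)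
    simpa [pow_two] using this
  have h1 : (fun t => y t - 1) =O[𝓝[>] 0] fun t => t := by
    have := (hy.trans ht2).add ((isBigO_refl (fun t : ℝ => t) (𝓝[>] 0)).const_mul_left c)
    simpa using this
  have hT : Tendsto (fun t => y t - 1) (𝓝[>] 0) (𝓝 0) := h1.trans_tendsto hid
  have hA : ContDiffAt ℝ 2 (fun z : ℝ => (1 + z) ^ s) 0 := by
    have : ContDiffAt ℝ 2 (fun z : ℝ => 1 + z) 0 := by fun_prop
    exact this.rpow_const_of_ne (by simp)
  have hder : deriv (fun z : ℝ => (1 + z) ^ s) 0 = s := by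
    have := (((hasDerivAt_id (0:ℝ)).const_add 1).rpow_const (p := s) (by simp)).deriv
    simpa using this
  have hB := (taylor2 _ hA).comp_tendsto hT
  rw [hder] at hB
  have hC := (hB.trans (h1.pow 2)).add (hy.const_mul_left s)
  refine hC.congr_left fun t => ?_
  simp only [Function.comp, add_zero, Real.one_rpow, add_sub_cancel]
  ring

theorem stmt_12 (f tp tm : ℝ → ℝ)
    (hf : ContDiffAt ℝ 4 f 0)
    (hf0 : f 0 = 0) (hf1 : deriv f 0 = 0) (hf2 : deriv (deriv f) 0 = 1/2)
    (hfpos : ∀ᶠ t in 𝓝 (0:ℝ), 0 < deriv (deriv f) t)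
    (htp : ∀ᶠ x in 𝓝[>] (0:ℝ), 0 < tp x ∧ f (tp x) = x)
    (htm : ∀ᶠ x in 𝓝[>] (0:ℝ), tm x < 0 ∧ f (tm x) = x)
    (htp0 : Tendsto tp (𝓝[>] (0:ℝ)) (𝓝 0))
    (htm0 : Tendsto tm (𝓝[>] (0:ℝ)) (𝓝 0)) :
    (fun x => 2 / ((tp x) ^ 3 * (deriv f (tp x)) ^ 2)
        + deriv (deriv f) (tp x) / ((tp x) ^ 2 * (deriv f (tp x)) ^ 3)
        - 3 / (8 * x ^ (5/2 : ℝ)))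
      =O[𝓝[>] (0:ℝ)] fun x => x ^ (-(3/2) : ℝ) := by
  have hid : Tendsto (fun t : ℝ => t) (𝓝[>] 0) (𝓝 0) := tendsto_nhdsWithin_of_tendsto_nhds tendsto_id
  have hc1 : ContDiffAt ℝ 3 (deriv f) 0 := cd_deriv _ 3 4 hf (by norm_num)
  have hc2 : ContDiffAt ℝ 2 (deriv (deriv f)) 0 := cd_deriv _ 2 3 hc1 (by norm_num)
  obtain ⟨d, hd⟩ : ∃ d, d = deriv (deriv (deriv f)) 0 := ⟨_, rfl⟩
  have e2 := taylor2 _ hc2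
  rw [← hd, hf2] at e2
  have e1 : (fun t => deriv f t - t / 2 - d / 2 * t ^ 2) =O[𝓝 0] fun t => t ^ 3 := by
    refine int_bigO _ _ 2 ?_ (by simp [hf1]) e2
    filter_upwards [hc1.eventually (by simp)] with t ht
    have h1 := (ht.differentiableAt (by simp)).hasDerivAt
    exact ((h1.sub ((hasDerivAt_id t).div_const 2)).sub (((hasDerivAt_id t).pow 2).const_mul (d/2))).congr_deriv (by simp; ring)
  have e0 : (fun t => f t - t ^ 2 / 4 - d / 6 * t ^ 3) =O[𝓝 0] fun t => t ^ 4 := by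
    refine int_bigO _ _ 3 ?_ (by simp [hf0]) e1
    filter_upwards [hf.eventually (by simp)] with t ht
    have h1 := (ht.differentiableAt (by simp)).hasDerivAt
    exact ((h1.sub (((hasDerivAt_id t).pow 2).div_const 4)).sub (((hasDerivAt_id t).pow 3).const_mul (d/6))).congr_deriv (by simp; ring)
  have hpos : ∀ᶠ t in 𝓝[>] (0:ℝ), 0 < t := self_mem_nhdsWithin
  obtain ⟨u, hu⟩ : ∃ u : ℝ → ℝ, u = fun t => 2 * deriv f t / t := ⟨_, rfl⟩
  obtain ⟨v, hv⟩ : ∃ v : ℝ → ℝ, v = fun t => 2 * deriv (deriv f) t := ⟨_, rfl⟩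
  obtain ⟨w, hw⟩ : ∃ w : ℝ → ℝ, w = fun t => 4 * f t / t ^ 2 := ⟨_, rfl⟩
  have eu : (fun t => u t - 1 - d * t) =O[𝓝[>] 0] fun t => t ^ 2 := by
    have := ((e1.mono nhdsWithin_le_nhds).mul (isBigO_refl (fun t : ℝ => t⁻¹) (𝓝[>] 0))).const_mul_left 2
    refine this.congr' ?_ ?_ <;> filter_upwards [hpos] with t ht
    · simp only [hu]; field_simp
    · field_simp
  have ev : (fun t => v t - 1 - 2 * d * t) =O[𝓝[>] 0] fun t => t ^ 2 := by
    refine ((e2.mono nhdsWithin_le_nhds).const_mul_left 2).congr_left fun t => ?_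
    simp only [hv]; ring
  have ew : (fun t => w t - 1 - (2/3 * d) * t) =O[𝓝[>] 0] fun t => t ^ 2 := by
    have := ((e0.mono nhdsWithin_le_nhds).mul (isBigO_refl (fun t : ℝ => (t^2)⁻¹) (𝓝[>] 0))).const_mul_left 4
    refine this.congr' ?_ ?_ <;> filter_upwards [hpos] with t ht
    · simp only [hw]; field_simp; ring
    · field_simp
  have lim : ∀ (y : ℝ → ℝ) (c : ℝ), ((fun t => y t - 1 - c * t) =O[𝓝[>] 0] fun t => t ^ 2) →
      Tendsto y (𝓝[>] 0) (𝓝 1) := by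
    intro y c hy
    have h1 : Tendsto (fun t : ℝ => t ^ 2) (𝓝[>] 0) (𝓝 0) := by simpa using hid.pow 2
    have h2 := ((hy.trans_tendsto h1).add (hid.const_mul c)).add_const 1
    simpa using h2
  have u2 := rpow_exp (-2) _ _ eu
  have u3 := rpow_exp (-3) _ _ eu
  have w5 := rpow_exp (-(5/2)) _ _ ew
  have w3 := lim _ _ (rpow_exp (3/2) _ _ ew)
  have hH : (fun t => 8 * u t ^ (-2:ℝ) + 4 * (v t * u t ^ (-3:ℝ)) - 12 * w t ^ (-(5/2):ℝ))
      =O[𝓝[>] 0] fun t => t ^ 2 := by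
    have a1 : (fun t => (v t - 1 - 2 * d * t) * u t ^ (-3:ℝ)) =O[𝓝[>] 0] fun t => t ^ 2 := by
      simpa using ev.mul ((lim _ _ u3).isBigO_one ℝ)
    have a2 : (fun t => (1 + 2 * d * t) * (u t ^ (-3:ℝ) - 1 - (-3) * d * t)) =O[𝓝[>] 0] fun t => t ^ 2 := by
      have : Tendsto (fun t : ℝ => 1 + 2 * d * t) (𝓝[>] 0) (𝓝 (1 + 2 * d * 0)) :=
        (hid.const_mul _).const_add _
      simpa using (this.isBigO_one ℝ).mul u3
    have a3 := (isBigO_refl (fun t : ℝ => t ^ 2) (𝓝[>] 0)).const_mul_left (-24 * d ^ 2)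
    refine ((((u2.const_mul_left 8).add (a1.const_mul_left 4)).add (a2.const_mul_left 4)).add
      (a3.sub (w5.const_mul_left 12))).congr_left fun t => ?_
    ring
  have hup := (lim _ _ eu).eventually (lt_mem_nhds (zero_lt_one))
  have hwp := (lim _ _ ew).eventually (lt_mem_nhds (zero_lt_one))
  have fw : ∀ᶠ t in 𝓝[>] (0:ℝ), ∀ s : ℝ, f t ^ s = (t / 2) ^ (2 * s) * w t ^ s := by
    filter_upwards [hpos, hwp] with t ht hwt s
    have : f t = (t / 2) ^ (2:ℝ) * w t := by
      simp only [hw]; norm_num; field_simp; norm_num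
    rw [this, Real.mul_rpow (by positivity) hwt.le, ← Real.rpow_mul (by positivity)]
  have key : (fun t => 2 / (t ^ 3 * (deriv f t) ^ 2)
        + deriv (deriv f) t / (t ^ 2 * (deriv f t) ^ 3)
        - 3 / (8 * f t ^ (5/2 : ℝ))) =O[𝓝[>] (0:ℝ)] fun t => f t ^ (-(3/2) : ℝ) := by
    have b1 := (hH.mul (isBigO_refl (fun t : ℝ => (t^5)⁻¹) (𝓝[>] 0)))
    have b2 : (fun t : ℝ => t ^ 2 * (t^5)⁻¹) =O[𝓝[>] 0] fun t => f t ^ (-(3/2) : ℝ) := by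
      have b3 := ((isBigO_refl (fun t : ℝ => f t ^ (-(3/2) : ℝ)) (𝓝[>] 0)).mul
        (w3.isBigO_one ℝ)).const_mul_left (1/8)
      refine b3.congr' ?_ ?_
      · filter_upwards [hpos, hwp, fw] with t ht hwt hft
        have q : (2:ℝ) * -(3/2) = -((3:ℕ):ℝ) := by norm_num
        rw [hft, q, Real.rpow_neg hwt.le, Real.rpow_neg (by positivity), Real.rpow_natCast]
        have : w t ^ (3/2:ℝ) ≠ 0 := (Real.rpow_pos_of_pos hwt _).ne'
        field_simp
        try norm_num
      · filter_upwards with t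
        simp
    refine (b1.congr' ?_ EventuallyEq.rfl).trans b2
    filter_upwards [hpos, hwp, hup, fw] with t ht hwt hut hft
    have q : (2:ℝ) * (5/2) = ((5:ℕ):ℝ) := by norm_num
    have q2 : (-2:ℝ) = -((2:ℕ):ℝ) := by norm_num
    have q3 : (-3:ℝ) = -((3:ℕ):ℝ) := by norm_num
    have hdu : deriv f t = t * u t / 2 := by simp only [hu]; field_simp
    have hdv : deriv (deriv f) t = v t / 2 := by simp only [hv]; ring
    have : w t ^ (5/2:ℝ) ≠ 0 := (Real.rpow_pos_of_pos hwt _).ne'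
    rw [hft, q, hdv, hdu, q2, q3, Real.rpow_neg hut.le, Real.rpow_neg hut.le, Real.rpow_neg hwt.le,
      Real.rpow_natCast, Real.rpow_natCast, Real.rpow_natCast]
    field_simp
    try ring
  have hT : Tendsto tp (𝓝[>] 0) (𝓝[>] 0) :=
    tendsto_nhdsWithin_iff.2 ⟨htp0, htp.mono fun x hx => hx.1⟩
  refine (key.comp_tendsto hT).congr' ?_ ?_ <;> filter_upwards [htp] with x hx
  · simp only [Function.comp, hx.2]
  · simp only [Function.comp, hx.2]
end

section
/- Let $\omega : \mathbb{R} \to (0, \infty)$ be twice differentiable with $\omega(0) = 1$, $\omega'(0) = 0$, and $\omega'(\pi) = 0$. For $r > 0$ define $\rho_r(\varphi) = \dfrac{\omega(\pi - \varphi)\, \omega(\varphi)\, (e^{2r} - 1)}{\omega(\varphi) + \omega(\pi - \varphi) e^{2r}}$ and $c_r(\varphi) = \rho_r(\varphi) \, (\sin\varphi, \cos\varphi)$. Then $c_r''(0) = \Big( 0, \ \dfrac{(e^{2r} - 1)\big( e^{2r} \omega(\pi)^2 (\omega''(0) - 1) + \omega''(\pi) - \omega(\pi) \big)}{(1 + e^{2r}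 \omega(\pi))^2} \Big)$, and in particular $c_r''(0) \to (0, \ \omega''(0) - 1)$ as $r \to \infty$. -/
open Filter Topology Real

/-- The second derivative at `φ = 0` of the Cartesian parametrization of the Hilbert
circle of radius `r`, and its limit `(0, ω''(0) - 1)` as `r → ∞`. -/
theorem stmt_16 (ω : ℝ → ℝ) (hωpos : ∀ φ, 0 < ω φ)
    (hω : Differentiable ℝ ω) (hω' : Differentiable ℝ (deriv ω))
    (hω0 : ω 0 = 1) (hω1 : deriv ω 0 = 0) (hω1π : deriv ω π = 0)
    (ρ : ℝ → ℝ → ℝ)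
    (hρ : ∀ r φ, ρ r φ =
      ω (π - φ) * ω φ * (Real.exp (2 * r) - 1) / (ω φ + ω (π - φ) * Real.exp (2 * r)))
    (c : ℝ → ℝ → ℝ × ℝ)
    (hc : ∀ r φ, c r φ = (ρ r φ * Real.sin φ, ρ r φ * Real.cos φ)) :
    (∀ r : ℝ, 0 < r → deriv (deriv (c r)) 0 =
      (0, (Real.exp (2 * r) - 1) *
            (Real.exp (2 * r) * ω π ^ 2 * (deriv (deriv ω) 0 - 1) + deriv (deriv ω) π - ω π) /
          (1 + Real.exp (2 * r) * ω π) ^ 2)) ∧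
      Tendsto (fun r => deriv (deriv (c r)) 0) atTop (𝓝 (0, deriv (deriv ω) 0 - 1)) := by
  have key : ∀ r : ℝ, deriv (deriv (c r)) 0 =
      (0, (Real.exp (2 * r) - 1) *
            (Real.exp (2 * r) * ω π ^ 2 * (deriv (deriv ω) 0 - 1) + deriv (deriv ω) π - ω π) /
          (1 + Real.exp (2 * r) * ω π) ^ 2) := by
    intro r
    have hE : 0 < Real.exp (2 * r) := Real.exp_pos _
    generalize hEE : Real.exp (2 * r) = E at *
    have hb : ∀ φ, HasDerivAt ω (deriv ω φ) φ := fun φ => (hω φ).hasDerivAt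
    have hb2 : ∀ φ, HasDerivAt (deriv ω) (deriv (deriv ω) φ) φ := fun φ => (hω' φ).hasDerivAt
    have hs : ∀ φ : ℝ, HasDerivAt (fun x : ℝ => π - x) (-1) φ := fun φ => by
      simpa using (hasDerivAt_id φ).const_sub π
    have ha : ∀ φ, HasDerivAt (fun x => ω (π - x)) (-deriv ω (π - φ)) φ := fun φ => by
      simpa [Function.comp_def] using (hb (π - φ)).comp φ (hs φ)
    have ha2 : ∀ φ, HasDerivAt (fun x => deriv ω (π - x)) (-deriv (deriv ω) (π - φ)) φ := fun φ => by
      simpa [Function.comp_def] using (hb2 (π - φ)).comp φ (hs φ)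
    have hD : ∀ φ, 0 < ω φ + ω (π - φ) * E := fun φ =>
      add_pos (hωpos _) (mul_pos (hωpos _) hE)
    have hρf : ρ r = fun φ => ω (π - φ) * ω φ * (E - 1) / (ω φ + ω (π - φ) * E) := by
      funext φ; rw [hρ, hEE]
    have hDd : ∀ φ, HasDerivAt (fun x => ω x + ω (π - x) * E)
        (deriv ω φ + -deriv ω (π - φ) * E) φ := fun φ => (hb φ).add ((ha φ).mul_const E)
    obtain ⟨σ, hσ⟩ : ∃ σ : ℝ → ℝ, σ = fun φ => (E - 1) *
        (E * ω (π - φ) ^ 2 * deriv ω φ - ω φ ^ 2 * deriv ω (π - φ)) /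
          (ω φ + ω (π - φ) * E) ^ 2 := ⟨_, rfl⟩
    have hρ1 : ∀ φ, HasDerivAt (ρ r) (σ φ) φ := by
      intro φ
      rw [hρf, hσ]
      refine ((((ha φ).mul (hb φ)).mul_const (E - 1)).div (hDd φ) (hD φ).ne').congr_deriv ?_
      simp only [Pi.mul_apply]
      congr 1
      ring
    have hσ0 : σ 0 = 0 := by simp [hσ, hω1, hω1π]
    have hσ1 : HasDerivAt σ ((E - 1) * (E * ω π ^ 2 * deriv (deriv ω) 0 + deriv (deriv ω) π) /
        (1 + E * ω π) ^ 2) 0 := by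
      rw [hσ]
      have hne : (1 + ω π * E) ≠ 0 := by have := hD 0; rw [sub_zero, hω0] at this; exact this.ne'
      have hne' : (1 + E * ω π) ≠ 0 := by rwa [mul_comm E]
      refine ((((((ha 0).pow 2).const_mul E).mul (hb2 0)).sub
        (((hb 0).pow 2).mul (ha2 0))).const_mul (E - 1)|>.div ((hDd 0).pow 2)
          (pow_ne_zero 2 (hD 0).ne')).congr_deriv ?_
      simp [hω0, hω1, hω1π]
      field_simp
    have hcd : deriv (c r) = fun φ => (σ φ * Real.sin φ + ρ r φ * Real.cos φ,
        σ φ * Real.cos φ + ρ r φ * (-Real.sin φ)) := by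
      funext φ
      have : c r = fun φ => (ρ r φ * Real.sin φ, ρ r φ * Real.cos φ) := funext (hc r)
      rw [this]
      exact (((hρ1 φ).mul (Real.hasDerivAt_sin φ)).prodMk
        ((hρ1 φ).mul (Real.hasDerivAt_cos φ))).deriv
    rw [hcd]
    have h2 := (((hσ1.mul (Real.hasDerivAt_sin 0)).add ((hρ1 0).mul (Real.hasDerivAt_cos 0))).prodMk
        ((hσ1.mul (Real.hasDerivAt_cos 0)).add ((hρ1 0).mul (Real.hasDerivAt_sin 0).neg))).deriv
    refine Eq.trans h2 ?_
    have hne : (1 + E * ω π) ≠ 0 := by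
      have := hD 0; rw [sub_zero, hω0, mul_comm] at this; exact this.ne'
    have hρ0 : ρ r 0 = ω π * (E - 1) / (1 + E * ω π) := by
      rw [hρf]; simp [hω0, mul_comm]
    rw [hσ0, hρ0]
    simp only [Real.sin_zero, Real.cos_zero, Prod.mk.injEq]
    constructor
    · simp
    · simp
      field_simp
      ring
  refine ⟨fun r _ => key r, ?_⟩
  simp_rw [key]
  refine tendsto_const_nhds.prodMk_nhds ?_
  have hp := hωpos π
  have ht : Tendsto (fun r : ℝ => Real.exp (-(2 * r))) atTop (𝓝 0) :=
    Real.tendsto_exp_neg_atTop_nhds_zero.comp (tendsto_id.const_mul_atTop (by norm_num))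
  have hF : ContinuousAt (fun t : ℝ => (1 - t) *
      (ω π ^ 2 * (deriv (deriv ω) 0 - 1) + t * (deriv (deriv ω) π - ω π)) / (t + ω π) ^ 2) 0 := by
    refine ContinuousAt.div (by fun_prop) (by fun_prop) ?_
    simp [hp.ne']
  have h3 := hF.tendsto.comp ht
  have e0 : (1 - (0:ℝ)) * (ω π ^ 2 * (deriv (deriv ω) 0 - 1) + 0 * (deriv (deriv ω) π - ω π)) /
      (0 + ω π) ^ 2 = deriv (deriv ω) 0 - 1 := by
    field_simp
    ring
  rw [e0] at h3
  refine h3.congr fun r => ?_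
  have hE : 0 < Real.exp (2 * r) := Real.exp_pos _
  simp only [Function.comp, Real.exp_neg]
  generalize Real.exp (2 * r) = E at *
  have h4 : (1 + E * ω π) ≠ 0 := by positivity
  have h5 : (E⁻¹ + ω π) ≠ 0 := by positivity
  field_simp
  ring
end

section
/- With $f$, $t_+$, $t_-$ as in the context, let $H > 0$. Then $\dfrac{\tfrac{1}{2}\big( \tfrac{1}{x} + \tfrac{1}{H - x} \big)}{2 \Big( \tfrac{1}{2}\big( \tfrac{1}{t_+(x)} - \tfrac{1}{t_-(x)} \big) \Big)^2} \longrightarrow 1$ as $x \to 0^+$. (The numerator is the Hilbert metric $F((0,x),(0,1))$ in the vertical direction, where $H$ is the length of the vertical chord of the domain through $(0,x)$; the denominator is $2 F((0,x),(1,0))^2$; the whole quotient is the normal curvature of the Hilbert circle through $(0,x)$ centered on the vertical chord, which therefore tends to $1$ as the radius tends to infinity.) -/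
open Filter Topology Asymptotics

theorem aux_quot (f : ℝ → ℝ) (hf : ContDiffAt ℝ 4 f 0)
    (hf0 : f 0 = 0) (hf1 : deriv f 0 = 0) (hf2 : deriv (deriv f) 0 = 1/2) :
    Tendsto (fun t => f t / t ^ 2) (𝓝[≠] (0:ℝ)) (𝓝 (1/4)) := by
  have hd : HasDerivAt (deriv f) (1/2) 0 := by
    rw [← hf2]
    apply DifferentiableAt.hasDerivAt
    by_contra h
    rw [deriv_zero_of_not_differentiableAt h] at hf2
    norm_num at hf2
  have hdf : ∀ᶠ t in 𝓝 (0:ℝ), DifferentiableAt ℝ f t := by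
    filter_upwards [hf.eventually (by simp)] with t ht
    exact ht.differentiableAt (by norm_num)
  have hc : ContinuousAt f 0 := hf.continuousAt
  refine HasDerivAt.lhopital_zero_nhdsNE (f := f) (g := fun t => t ^ 2) (f' := deriv f)
    (g' := fun t => 2 * t) ?_ ?_ ?_ ?_ ?_ ?_
  · exact (hdf.filter_mono nhdsWithin_le_nhds).mono fun t ht => ht.hasDerivAt
  · exact Eventually.of_forall fun t => by simpa using hasDerivAt_pow 2 t
  · filter_upwards [self_mem_nhdsWithin] with t ht
    have : t ≠ 0 := ht
    positivity
  · have := hc.tendsto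
    rw [hf0] at this
    exact this.mono_left nhdsWithin_le_nhds
  · have : Tendsto (fun t : ℝ => t ^ 2) (𝓝 0) (𝓝 (0 ^ 2)) := (continuous_pow 2).tendsto 0
    simp only [ne_eq, OfNat.ofNat_ne_zero, not_false_eq_true, zero_pow] at this
    exact this.mono_left nhdsWithin_le_nhds
  · have h := (hasDerivAt_iff_tendsto_slope.1 hd).const_mul (1/2)
    have e : (1/2 * (1/2) : ℝ) = 1/4 := by norm_num
    rw [e] at h
    refine h.congr fun t => ?_
    rw [slope_def_field, hf1, sub_zero, sub_zero]
    ring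

theorem stmt_17 (f tp tm : ℝ → ℝ) (H : ℝ) (hH : 0 < H)
    (hf : ContDiffAt ℝ 4 f 0)
    (hf0 : f 0 = 0) (hf1 : deriv f 0 = 0) (hf2 : deriv (deriv f) 0 = 1/2)
    (hfpos : ∀ᶠ t in 𝓝 (0:ℝ), 0 < deriv (deriv f) t)
    (htp : ∀ᶠ x in 𝓝[>] (0:ℝ), 0 < tp x ∧ f (tp x) = x)
    (htm : ∀ᶠ x in 𝓝[>] (0:ℝ), tm x < 0 ∧ f (tm x) = x)
    (htp0 : Tendsto tp (𝓝[>] (0:ℝ)) (𝓝 0))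
    (htm0 : Tendsto tm (𝓝[>] (0:ℝ)) (𝓝 0)) :
    Tendsto
      (fun x => (1/2 * (1 / x + 1 / (H - x))) / (2 * (1/2 * (1 / tp x - 1 / tm x)) ^ 2))
      (𝓝[>] (0:ℝ)) (𝓝 1) := by
  have hq := aux_quot f hf hf0 hf1 hf2
  have hs : √(1/4 : ℝ) = 1/2 := by
    rw [show (1/4 : ℝ) = (1/2)^2 by norm_num]
    exact Real.sqrt_sq (by norm_num)
  have hp : Tendsto (fun x => √x / tp x) (𝓝[>] (0:ℝ)) (𝓝 (1/2)) := by
    have h1 : Tendsto tp (𝓝[>] (0:ℝ)) (𝓝[≠] 0) :=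
      tendsto_nhdsWithin_iff.2 ⟨htp0, htp.mono fun x hx => hx.1.ne'⟩
    have h2 := (hq.comp h1).sqrt
    rw [hs] at h2
    refine h2.congr' ?_
    filter_upwards [htp, self_mem_nhdsWithin] with x hx hx0
    have hx0 : 0 < x := hx0
    simp only [Function.comp]
    rw [hx.2, Real.sqrt_div hx0.le, Real.sqrt_sq hx.1.le]
  have hm : Tendsto (fun x => √x / tm x) (𝓝[>] (0:ℝ)) (𝓝 (-(1/2))) := by
    have h1 : Tendsto tm (𝓝[>] (0:ℝ)) (𝓝[≠] 0) :=
      tendsto_nhdsWithin_iff.2 ⟨htm0, htm.mono fun x hx => hx.1.ne⟩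
    have h2 := (hq.comp h1).sqrt.neg
    rw [hs] at h2
    refine h2.congr' ?_
    filter_upwards [htm, self_mem_nhdsWithin] with x hx hx0
    have hx0 : 0 < x := hx0
    simp only [Function.comp]
    rw [hx.2, Real.sqrt_div hx0.le, Real.sqrt_sq_eq_abs, abs_of_neg hx.1, div_neg, neg_neg]
  have hx : Tendsto (fun x : ℝ => x) (𝓝[>] (0:ℝ)) (𝓝 0) :=
    tendsto_id.mono_left nhdsWithin_le_nhds
  have hn : Tendsto (fun x : ℝ => 1/2 * (1 + x / (H - x))) (𝓝[>] (0:ℝ))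
      (𝓝 (1/2 * (1 + 0 / (H - 0)))) :=
    ((hx.div (hx.const_sub H) (by simpa using hH.ne')).const_add 1).const_mul (1/2)
  have hall := hn.div (((((hp.sub hm).const_mul (1/2)).pow 2).const_mul 2)) (by norm_num)
  have e : (1/2 * (1 + 0 / (H - 0))) / (2 * (1/2 * (1/2 - -(1/2))) ^ 2) = (1:ℝ) := by
    norm_num
  rw [e] at hall
  refine hall.congr' ?_
  filter_upwards [self_mem_nhdsWithin] with x hx0
  have hx0 : 0 < x := hx0
  have a1 : 1/2 * (1 + x / (H - x)) = x * (1/2 * (1 / x + 1 / (H - x))) := by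
    have : x * (1 / x) = 1 := by field_simp
    linear_combination (-1/2) * this
  have a2 : 2 * (1/2 * (√x / tp x - √x / tm x)) ^ 2
      = x * (2 * (1/2 * (1 / tp x - 1 / tm x)) ^ 2) := by
    have : √x ^ 2 = x := Real.sq_sqrt hx0.le
    linear_combination (2 * (1/2 * (1 / tp x - 1 / tm x)) ^ 2) * this
  simp only [Pi.div_apply]
  rw [a1, a2, mul_div_mul_left _ _ hx0.ne']
end
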